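/- arXiv:math/9504219 — 2 statements merged into one kernel-verified Lean document; each statement's English description precedes it below -/
import Mathlib

section
/- At x = 0, i^n q^{n^2/4} \psi_n(-i, 0) equals (q; q^2)_{n/2}^2 if n is even and 0 if n is odd; consequently E_q(0; -i, b/2) = \sum_{n=0}^{\infty} ((q;q^2)_n/(q^2;q^2)_n)(-b^2/4)^n = (-q b^2/4; q^2)_\infty/(-b^2/4; q^2)_\infty. -/
open Finset Complex

/-- The q-shifted factorial `(c;q)_n`. -/
noncomputable def qpg (c q : ℂ) (n : ℕ) : ℂ := ∏ k ∈ range n, (1 - c * q ^ k)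

/-- `(q;q)_n`. -/
noncomputable def qp (q : ℂ) (n : ℕ) : ℂ := ∏ k ∈ range n, (1 - q ^ (k + 1))

/-- `ψ_n(a, x)` with `x = (z + z⁻¹)/2` and `q = s⁴`. -/
noncomputable def psi4 (a s : ℂ) (n : ℕ) (z : ℂ) : ℂ :=
  qpg (a * s ^ (2 - 2 * (n : ℤ)) * z) (s ^ 4) n *
    qpg (a * s ^ (2 - 2 * (n : ℤ)) * z⁻¹) (s ^ 4) n

/-- The q-exponential `E_q(x; a, b)`, `q = s⁴`. -/
noncomputable def qExpE (a b s z : ℂ) : ℂ :=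
  ∑' n : ℕ, s ^ (n ^ 2) * psi4 a s n z * b ^ n / qp (s ^ 4) n

open Filter Topology

lemma aux_psi (s : ℂ) (hs : s ≠ 0) (n : ℕ) :
    psi4 (-I) s n I = ∏ k ∈ range n, (1 - (s ^ 4) ^ (1 - (n : ℤ) + 2 * (k : ℤ))) := by
  unfold psi4 qpg
  rw [← prod_mul_distrib]
  refine prod_congr rfl fun k _ => ?_
  have h1 : -I * s ^ (2 - 2 * (n : ℤ)) * I = s ^ (2 - 2 * (n : ℤ)) := by
    linear_combination (-s ^ (2 - 2 * (n : ℤ))) * I_mul_I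
  have h2 : -I * s ^ (2 - 2 * (n : ℤ)) * I⁻¹ = - s ^ (2 - 2 * (n : ℤ)) := by
    rw [inv_I]
    linear_combination (s ^ (2 - 2 * (n : ℤ))) * I_mul_I
  rw [h1, h2]
  have h3 : (s ^ 4) ^ (1 - (n : ℤ) + 2 * (k : ℤ))
      = (s ^ (2 - 2 * (n : ℤ)) * (s ^ 4) ^ k) ^ 2 := by
    have e1 : (s ^ 4) ^ (1 - (n : ℤ) + 2 * (k : ℤ)) = s ^ (4 * (1 - (n : ℤ) + 2 * (k : ℤ))) := by
      rw [zpow_mul]; norm_cast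
    have e2 : (s ^ 4) ^ k = s ^ (4 * (k : ℤ)) := by
      rw [zpow_mul]; norm_cast
    rw [e1, e2, ← zpow_add₀ hs, ← zpow_natCast, ← zpow_mul]
    congr 1
    push_cast
    ring
  rw [h3]
  ring

lemma aux_refl (q : ℂ) (hq : q ≠ 0) (m : ℕ) :
    (-1) ^ m * q ^ (m ^ 2) * ∏ k ∈ range m, (1 - q ^ (-(1 + 2 * (k : ℤ))))
      = ∏ k ∈ range m, (1 - q ^ (1 + 2 * k)) := by
  induction m with
  | zero => simp
  | succ m ih =>
    rw [prod_range_succ, prod_range_succ, ← ih]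
    have e : q ^ (-(1 + 2 * (m : ℤ))) = (q ^ (1 + 2 * m))⁻¹ := by
      rw [zpow_neg]; norm_cast
    have h0 : q ^ (1 + 2 * m) ≠ 0 := pow_ne_zero _ hq
    have e2 : q ^ ((m + 1) ^ 2) = q ^ (m ^ 2) * q ^ (1 + 2 * m) := by
      rw [← pow_add]; congr 1; ring
    rw [e, e2]
    generalize q ^ (1 + 2 * m) = x at *
    field_simp
    ring

lemma aux_even (s : ℂ) (hs : s ≠ 0) (m : ℕ) :
    s ^ ((2 * m) ^ 2) * psi4 (-I) s (2 * m) I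
      = (-1) ^ m * (∏ k ∈ range m, (1 - (s ^ 4) ^ (1 + 2 * k))) ^ 2 := by
  have hq : s ^ 4 ≠ 0 := pow_ne_zero _ hs
  have e0 : s ^ ((2 * m) ^ 2) = (s ^ 4) ^ (m ^ 2) := by
    rw [← pow_mul]; congr 1; ring
  rw [aux_psi s hs, e0]
  generalize s ^ 4 = q at *
  have h := aux_refl q hq m
  have e : range (2 * m) = range (m + m) := by rw [two_mul]
  rw [e, prod_range_add, ← prod_range_reflect]
  have a1 : ∏ j ∈ range m, (1 - q ^ (1 - ((2 * m : ℕ) : ℤ) + 2 * ((m - 1 - j : ℕ) : ℤ)))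
      = ∏ k ∈ range m, (1 - q ^ (-(1 + 2 * (k : ℤ)))) := by
    refine prod_congr rfl fun k hk => ?_
    have := mem_range.1 hk
    congr 2
    omega
  have a2 : ∏ j ∈ range m, (1 - q ^ (1 - ((2 * m : ℕ) : ℤ) + 2 * ((m + j : ℕ) : ℤ)))
      = ∏ k ∈ range m, (1 - q ^ (1 + 2 * k)) := by
    refine prod_congr rfl fun k hk => ?_
    rw [← zpow_natCast]
    congr 2
    push_cast
    ring
  rw [a1, a2]
  have h1 : ((-1 : ℂ) ^ m) * (-1) ^ m = 1 := by rw [← mul_pow]; simp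
  rw [sq (∏ k ∈ range m, (1 - q ^ (1 + 2 * k)))]
  nth_rewrite 2 [← h]
  linear_combination (-(q ^ (m ^ 2) * (∏ k ∈ range m, (1 - q ^ (-(1 + 2 * (k : ℤ)))))
    * ∏ k ∈ range m, (1 - q ^ (1 + 2 * k)))) * h1

lemma aux_odd (s : ℂ) (hs : s ≠ 0) (m : ℕ) : psi4 (-I) s (2 * m + 1) I = 0 := by
  rw [aux_psi s hs]
  refine prod_eq_zero (i := m) (mem_range.2 (by omega)) ?_
  have : (1 - ((2 * m + 1 : ℕ) : ℤ) + 2 * (m : ℤ)) = 0 := by push_cast; ring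
  rw [this]; simp

lemma aux_qp (q : ℂ) (m : ℕ) : qp q (2 * m) =
    (∏ j ∈ range m, (1 - q ^ (1 + 2 * j))) * ∏ j ∈ range m, (1 - q ^ (2 + 2 * j)) := by
  unfold qp
  induction m with
  | zero => simp
  | succ m ih =>
    rw [show 2 * (m + 1) = 2 * m + 1 + 1 by ring, prod_range_succ, prod_range_succ, ih,
      prod_range_succ, prod_range_succ]
    ring_nf

/-- coefficients -/
noncomputable def cf (q : ℝ) (n : ℕ) : ℂ :=
  (∏ j ∈ range n, (1 - (q : ℂ) ^ (1 + 2 * j))) / (∏ j ∈ range n, (1 - (q : ℂ) ^ (2 + 2 * j)))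

lemma one_sub_ne (q : ℝ) (hq0 : 0 < q) (hq1 : q < 1) (k : ℕ) (hk : k ≠ 0) :
    (1 - (q : ℂ) ^ k) ≠ 0 := by
  have := pow_lt_one₀ hq0.le hq1 hk
  have h : (1 - q ^ k : ℝ) ≠ 0 := by linarith
  exact_mod_cast h

lemma cf_succ (q : ℝ) (hq0 : 0 < q) (hq1 : q < 1) (n : ℕ) :
    cf q (n + 1) * (1 - (q : ℂ) ^ (2 + 2 * n)) = cf q n * (1 - (q : ℂ) ^ (1 + 2 * n)) := by
  unfold cf
  have h := one_sub_ne q hq0 hq1 (2 + 2 * n) (by omega)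
  have h' : ∏ j ∈ range n, (1 - (q : ℂ) ^ (2 + 2 * j)) ≠ 0 :=
    prod_ne_zero_iff.2 fun j _ => one_sub_ne q hq0 hq1 _ (by omega)
  rw [prod_range_succ, prod_range_succ]
  field_simp

lemma cf_norm (q : ℝ) (hq0 : 0 < q) (hq1 : q < 1) (n : ℕ) : ‖cf q n‖ ≤ 1 := by
  induction n with
  | zero => simp [cf]
  | succ n ih =>
    have h := congrArg norm (cf_succ q hq0 hq1 n)
    rw [norm_mul, norm_mul] at h
    have nn : ∀ k : ℕ, k ≠ 0 → ‖1 - (q : ℂ) ^ k‖ = 1 - q ^ k := by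
      intro k hk
      have := pow_lt_one₀ hq0.le hq1 hk
      rw [← Complex.ofReal_pow, ← Complex.ofReal_one, ← Complex.ofReal_sub, Complex.norm_real,
        Real.norm_of_nonneg (by linarith)]
    rw [nn _ (by omega), nn _ (by omega)] at h
    have h1 := pow_lt_one₀ hq0.le hq1 (show 2 + 2 * n ≠ 0 by omega)
    have h2 := pow_lt_one₀ hq0.le hq1 (show 1 + 2 * n ≠ 0 by omega)
    have h3 : q ^ (2 + 2 * n) ≤ q ^ (1 + 2 * n) :=
      pow_le_pow_of_le_one hq0.le hq1.le (by omega)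
    by_contra hc
    push Not at hc
    nlinarith [norm_nonneg (cf q n)]

/-- series -/
noncomputable def fs (q : ℝ) (z : ℂ) : ℂ := ∑' n, cf q n * z ^ n

lemma fs_summable (q : ℝ) (hq0 : 0 < q) (hq1 : q < 1) (z : ℂ) (hz : ‖z‖ < 1) :
    Summable fun n => cf q n * z ^ n := by
  refine Summable.of_norm_bounded (summable_geometric_of_lt_one (norm_nonneg z) hz) fun n => ?_
  rw [norm_mul, norm_pow]
  exact mul_le_of_le_one_left (by positivity) (cf_norm q hq0 hq1 n)

lemma norm_q (q : ℝ) (hq0 : 0 < q) : ‖(q : ℂ)‖ = q := by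
  rw [Complex.norm_real, Real.norm_of_nonneg hq0.le]

lemma norm_pz (q : ℝ) (hq0 : 0 < q) (hq1 : q < 1) (z : ℂ) (k : ℕ) :
    ‖z * (q : ℂ) ^ k‖ ≤ ‖z‖ := by
  rw [norm_mul, norm_pow, norm_q q hq0]
  exact mul_le_of_le_one_right (norm_nonneg _) (pow_le_one₀ hq0.le hq1.le)

lemma fs_rec (q : ℝ) (hq0 : 0 < q) (hq1 : q < 1) (z : ℂ) (hz : ‖z‖ < 1) :
    (1 - z) * fs q z = (1 - q * z) * fs q (z * (q : ℂ) ^ 2) := by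
  have s1 := fs_summable q hq0 hq1 z hz
  have s2 := fs_summable q hq0 hq1 (z * (q : ℂ) ^ 2)
    ((norm_pz q hq0 hq1 z 2).trans_lt hz)
  have a1 := s1.tsum_eq_zero_add
  have a2 := s2.tsum_eq_zero_add
  have b1 : ∑' n, (cf q (n + 1) * z ^ (n + 1) - cf q (n + 1) * (z * (q : ℂ) ^ 2) ^ (n + 1))
      = ∑' n, (z * (cf q n * z ^ n) - (q * z) * (cf q n * (z * (q : ℂ) ^ 2) ^ n)) := by
    refine tsum_congr fun n => ?_
    have e1 : (z * (q : ℂ) ^ 2) ^ (n + 1) = z ^ (n + 1) * (q : ℂ) ^ (2 + 2 * n) := by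
      rw [mul_pow, ← pow_mul]; ring_nf
    have e2 : q * (z * (q : ℂ) ^ 2) ^ n = z ^ n * (q : ℂ) ^ (1 + 2 * n) := by
      rw [mul_pow, ← pow_mul]; ring
    rw [e1]
    linear_combination z ^ (n + 1) * cf_succ q hq0 hq1 n + z * cf q n * e2
  rw [Summable.tsum_sub ((summable_nat_add_iff 1).2 s1) ((summable_nat_add_iff 1).2 s2),
    Summable.tsum_sub (s1.mul_left _) (s2.mul_left _), tsum_mul_left, tsum_mul_left] at b1
  unfold fs
  simp only [pow_zero, mul_one] at a1 a2
  linear_combination b1 + a1 - a2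

lemma fs_iter (q : ℝ) (hq0 : 0 < q) (hq1 : q < 1) (z : ℂ) (hz : ‖z‖ < 1) (N : ℕ) :
    (∏ k ∈ range N, (1 + -z * (q : ℂ) ^ (2 * k))) * fs q z
      = (∏ k ∈ range N, (1 + q * -z * (q : ℂ) ^ (2 * k))) * fs q (z * (q : ℂ) ^ (2 * N)) := by
  induction N with
  | zero => simp
  | succ N ih =>
    have h := fs_rec q hq0 hq1 (z * (q : ℂ) ^ (2 * N)) ((norm_pz q hq0 hq1 z _).trans_lt hz)
    have e : z * (q : ℂ) ^ (2 * N) * (q : ℂ) ^ 2 = z * (q : ℂ) ^ (2 * (N + 1)) := by ring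
    rw [e] at h
    rw [prod_range_succ, prod_range_succ]
    linear_combination (1 + -z * (q : ℂ) ^ (2 * N)) * ih
      + (∏ k ∈ range N, (1 + q * -z * (q : ℂ) ^ (2 * k))) * h

lemma fs_lim (q : ℝ) (hq0 : 0 < q) (hq1 : q < 1) (z : ℂ) (hz : ‖z‖ < 1) :
    Tendsto (fun N : ℕ => fs q (z * (q : ℂ) ^ (2 * N))) atTop (𝓝 1) := by
  have h0 : fs q 0 = 1 := by
    unfold fs
    rw [tsum_eq_single 0 (by intro n hn; simp [hn])]
    simp [cf]
  rw [← h0]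
  have hl : Tendsto (fun N : ℕ => z * (q : ℂ) ^ (2 * N)) atTop (𝓝 0) := by
    have : ‖(q : ℂ) ^ 2‖ < 1 := by
      rw [norm_pow, norm_q q hq0]; exact pow_lt_one₀ hq0.le hq1 (by norm_num)
    have := (tendsto_pow_atTop_nhds_zero_of_norm_lt_one this).const_mul z
    simpa [pow_mul] using this
  unfold fs
  refine tendsto_tsum_of_dominated_convergence
    (summable_geometric_of_lt_one (norm_nonneg z) hz) (fun n => ?_) ?_
  · exact (hl.pow n).const_mul _
  · refine Eventually.of_forall fun N n => ?_
    rw [norm_mul, norm_pow]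
    calc _ ≤ 1 * ‖z * (q : ℂ) ^ (2 * N)‖ ^ n := by gcongr; exact cf_norm q hq0 hq1 n
      _ ≤ _ := by rw [one_mul]; gcongr; exact norm_pz q hq0 hq1 z _

lemma summ (q : ℝ) (hq0 : 0 < q) (hq1 : q < 1) (w : ℂ) :
    Summable fun k : ℕ => ‖w * (q : ℂ) ^ (2 * k)‖ := by
  have : q ^ 2 < 1 := pow_lt_one₀ hq0.le hq1 (by norm_num)
  have := (summable_geometric_of_lt_one (by positivity) this).mul_left ‖w‖
  refine this.congr fun k => ?_
  rw [norm_mul, norm_pow, norm_q q hq0, pow_mul]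

lemma fs_eq (q : ℝ) (hq0 : 0 < q) (hq1 : q < 1) (z : ℂ) (hz : ‖z‖ < 1) :
    fs q z = (∏' k : ℕ, (1 + q * -z * (q : ℂ) ^ (2 * k))) /
      ∏' k : ℕ, (1 + -z * (q : ℂ) ^ (2 * k)) := by
  have m1 := (multipliable_one_add_of_summable (summ q hq0 hq1 (q * -z))).tendsto_prod_tprod_nat
  have m2 := (multipliable_one_add_of_summable (summ q hq0 hq1 (-z))).tendsto_prod_tprod_nat
  have hne : ∏' k : ℕ, (1 + -z * (q : ℂ) ^ (2 * k)) ≠ 0 := by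
    refine tprod_one_add_ne_zero_of_summable (fun k hk => ?_) (summ q hq0 hq1 (-z))
    have h1 := norm_pz q hq0 hq1 z (2 * k)
    have h2 : z * (q : ℂ) ^ (2 * k) = 1 := by linear_combination -hk
    rw [h2, norm_one] at h1
    linarith
  rw [eq_div_iff hne, mul_comm]
  have t1 := m2.mul_const (fs q z)
  have t2 := m1.mul (fs_lim q hq0 hq1 z hz)
  rw [mul_one] at t2
  refine tendsto_nhds_unique t1 (t2.congr fun N => ?_)
  exact (fs_iter q hq0 hq1 z hz N).symm

lemma E_eq (q s : ℝ) (hq0 : 0 < q) (hq1 : q < 1) (hs : 0 < s)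
    (hsq : s ^ 4 = q) (b : ℂ) : qExpE (-I) (b / 2) (s : ℂ) I = fs q (-(b ^ 2 / 4)) := by
  have hs' : (s : ℂ) ≠ 0 := by exact_mod_cast hs.ne'
  have hq : (s : ℂ) ^ 4 = q := by exact_mod_cast hsq
  unfold qExpE fs
  have hinj : Function.Injective (fun m : ℕ => 2 * m) := fun a b h => by
    simpa using h
  rw [← hinj.tsum_eq]
  · refine tsum_congr fun m => ?_
    rw [aux_even _ hs', hq, aux_qp]
    unfold cf
    have h1 : ∏ j ∈ range m, (1 - (q : ℂ) ^ (1 + 2 * j)) ≠ 0 :=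
      prod_ne_zero_iff.2 fun j _ => one_sub_ne q hq0 hq1 _ (by omega)
    have h2 : ∏ j ∈ range m, (1 - (q : ℂ) ^ (2 + 2 * j)) ≠ 0 :=
      prod_ne_zero_iff.2 fun j _ => one_sub_ne q hq0 hq1 _ (by omega)
    have e : (-(b ^ 2 / 4)) ^ m = (-1) ^ m * (b / 2) ^ (2 * m) := by
      rw [pow_mul, ← mul_pow]; ring
    rw [e]
    field_simp
  · intro n hn
    rcases Nat.even_or_odd' n with ⟨m, rfl | rfl⟩
    · exact ⟨m, rfl⟩
    · exfalso
      apply hn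
      simp only [aux_odd _ hs']
      simp

/-- At `x = 0` (i.e. `z = i`): `iⁿ q^{n²/4} ψ_n(-i,0)` equals `(q;q²)_{n/2}²` for `n`
even and `0` for `n` odd; consequently
`E_q(0; -i, b/2) = ∑ₙ ((q;q²)ₙ/(q²;q²)ₙ)(-b²/4)ⁿ = (-qb²/4;q²)_∞/(-b²/4;q²)_∞`.
Here `q = s⁴`. -/
theorem qExpE_at_zero (q s : ℝ) (hq0 : 0 < q) (hq1 : q < 1) (hs : 0 < s)
    (hsq : s ^ 4 = q) (b : ℂ) (hb : ‖b‖ < 2) :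
    (∀ n : ℕ, I ^ n * (s : ℂ) ^ (n ^ 2) * psi4 (-I) (s : ℂ) n I =
        if n % 2 = 0 then (∏ j ∈ range (n / 2), (1 - (q : ℂ) ^ (1 + 2 * j))) ^ 2 else 0) ∧
      qExpE (-I) (b / 2) (s : ℂ) I =
        ∑' n : ℕ, (∏ j ∈ range n, (1 - (q : ℂ) ^ (1 + 2 * j))) /
            (∏ j ∈ range n, (1 - (q : ℂ) ^ (2 + 2 * j))) * (-(b ^ 2 / 4)) ^ n ∧
      qExpE (-I) (b / 2) (s : ℂ) I =
        (∏' k : ℕ, (1 + (q : ℂ) * b ^ 2 / 4 * (q : ℂ) ^ (2 * k))) /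
          ∏' k : ℕ, (1 + b ^ 2 / 4 * (q : ℂ) ^ (2 * k)) := by
  have hs' : (s : ℂ) ≠ 0 := by exact_mod_cast hs.ne'
  have hq : (s : ℂ) ^ 4 = q := by exact_mod_cast hsq
  have hE := E_eq q s hq0 hq1 hs hsq b
  refine ⟨fun n => ?_, hE, ?_⟩
  · rcases Nat.even_or_odd' n with ⟨m, rfl | rfl⟩
    · rw [mul_assoc, aux_even _ hs', hq, pow_mul, I_sq, ← mul_assoc, ← mul_pow]
      simp
    · rw [aux_odd _ hs', if_neg (by omega), mul_zero]
  · have hz : ‖-(b ^ 2 / 4)‖ < 1 := by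
      rw [norm_neg, norm_div, norm_pow]
      have : ‖(4 : ℂ)‖ = 4 := by simp
      rw [this]
      nlinarith [norm_nonneg b]
    rw [hE, fs_eq q hq0 hq1 _ hz]
    simp only [neg_neg, mul_div_assoc]
end

section
/- Generating relation for continuous q-Hermite polynomials: (-b^2/4; q^2)_\infty \, E_q(x; -i, b/2) = \sum_{k=0}^{\infty} (q^{k^2/4}/(q;q)_k)(ib/2)^k H_k(x|q). -/
open Finset Complex

/-- The continuous q-Hermite polynomial `H_k(x|q)` as a Laurent polynomial in
`z = e^{iθ}`, `x = (z + z⁻¹)/2`. -/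
noncomputable def Hq (q : ℂ) (n : ℕ) (z : ℂ) : ℂ :=
  ∑ k ∈ range (n + 1), qp q n / (qp q k * qp q (n - k)) * z ^ ((n : ℤ) - 2 * k)

/-- Coefficients of the Euler expansion. -/
noncomputable def ee (p : ℂ) (m : ℕ) : ℂ := p ^ (m.choose 2) / qp p m

noncomputable def hh (q z : ℂ) (n : ℕ) : ℂ := Hq q n z / qp q n

noncomputable def gg (s z : ℂ) (n : ℕ) : ℂ := s ^ (n ^ 2) * psi4 (-I) s n z / qp (s ^ 4) n

noncomputable def bb (s z : ℂ) (n : ℕ) : ℂ := s ^ (n ^ 2) * I ^ n * hh (s ^ 4) z n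

def lag (X : ℕ → ℂ) : ℕ → ℂ
  | 0 => 0
  | (n + 1) => X n

lemma qp_succ (q : ℂ) (n : ℕ) : qp q (n + 1) = qp q n * (1 - q ^ (n + 1)) := by
  simp [qp, prod_range_succ]

lemma qp_ne {q : ℂ} (h : ∀ n : ℕ, 1 - q ^ (n + 1) ≠ 0) (n : ℕ) : qp q n ≠ 0 := by
  rw [qp, prod_ne_zero_iff]
  exact fun k _ => h k

lemma ee_zero (p : ℂ) : ee p 0 = 1 := by simp [ee, qp]

lemma ee_succ {p : ℂ} (h : ∀ n : ℕ, 1 - p ^ (n + 1) ≠ 0) (m : ℕ) :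
    ee p (m + 1) * (1 - p ^ (m + 1)) = p ^ m * ee p m := by
  have h1 := qp_ne h m
  have h2 := h m
  rw [ee, ee, qp_succ, Nat.choose_succ_succ' m 1, Nat.choose_one_right, pow_add]
  field_simp

lemma one_sub_ne_s17 {p : ℂ} (hp : ‖p‖ < 1) (n : ℕ) : 1 - p ^ (n + 1) ≠ 0 := by
  intro h
  have h1 : p ^ (n + 1) = 1 := (sub_eq_zero.mp h).symm
  have h2 : ‖p‖ ^ (n + 1) = 1 := by rw [← norm_pow, h1, norm_one]
  have h3 : ‖p‖ ^ (n + 1) < 1 := pow_lt_one₀ (norm_nonneg _) hp (by omega)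
  linarith

lemma ee_summable {p : ℂ} (hp : ‖p‖ < 1) (x : ℂ) :
    Summable fun m => ‖ee p m * x ^ m‖ := by
  have ht : Filter.Tendsto (fun m : ℕ => ‖p‖ ^ m * (‖x‖ / (1 - ‖p‖))) Filter.atTop (nhds 0) := by
    have := (tendsto_pow_atTop_nhds_zero_of_lt_one (norm_nonneg p) hp).mul_const (‖x‖ / (1 - ‖p‖))
    simpa using this
  have hev := ht.eventually (eventually_le_nhds (show (0 : ℝ) < 1 / 2 by norm_num))
  refine summable_of_ratio_norm_eventually_le (r := 1 / 2) (by norm_num) ?_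
  filter_upwards [hev] with m hm
  rw [norm_norm, norm_norm]
  have h1 := ee_succ (one_sub_ne_s17 hp) m
  have h2 : 1 - ‖p‖ ≤ ‖1 - p ^ (m + 1)‖ := by
    have a1 := norm_sub_norm_le (1 : ℂ) (p ^ (m + 1))
    rw [norm_one, norm_pow] at a1
    have a2 : ‖p‖ ^ (m + 1) ≤ ‖p‖ := pow_le_of_le_one (norm_nonneg _) hp.le (by omega)
    linarith
  have hpos : 0 < 1 - ‖p‖ := by linarith
  have h3 : ‖ee p (m + 1)‖ * (1 - ‖p‖) ≤ ‖p‖ ^ m * ‖ee p m‖ := by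
    calc _ ≤ ‖ee p (m + 1)‖ * ‖1 - p ^ (m + 1)‖ := by gcongr
      _ = _ := by rw [← norm_mul, h1, norm_mul, norm_pow]
  have h4 : ‖ee p (m + 1)‖ ≤ ‖p‖ ^ m * ‖ee p m‖ / (1 - ‖p‖) := by
    rwa [le_div_iff₀ hpos]
  rw [norm_mul, norm_mul, norm_pow, norm_pow]
  calc _ ≤ ‖p‖ ^ m * ‖ee p m‖ / (1 - ‖p‖) * ‖x‖ ^ (m + 1) := by gcongr
    _ = (‖p‖ ^ m * (‖x‖ / (1 - ‖p‖))) * (‖ee p m‖ * ‖x‖ ^ m) := by ring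
    _ ≤ _ := by gcongr

lemma ee_fun {p : ℂ} (hp : ‖p‖ < 1) (x : ℂ) :
    ∑' m, ee p m * x ^ m = (1 + x) * ∑' m, ee p m * (p * x) ^ m := by
  have S1 := (ee_summable hp x).of_norm
  have S2 := (ee_summable hp (p * x)).of_norm
  rw [add_mul, one_mul, S1.tsum_eq_zero_add]
  rw [S2.tsum_eq_zero_add (f := fun m => ee p m * (p * x) ^ m)]
  rw [add_assoc]
  refine congrArg₂ (· + ·) (by simp) ?_
  have e : x * (ee p 0 * (p * x) ^ 0 + ∑' m, ee p (m + 1) * (p * x) ^ (m + 1))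
      = ∑' m, x * (ee p m * (p * x) ^ m) := by
    rw [tsum_mul_left, S2.tsum_eq_zero_add]
  rw [e, ← Summable.tsum_add ((summable_nat_add_iff 1).2 S2) (S2.mul_left x)]
  refine tsum_congr fun m => ?_
  have h1 := ee_succ (one_sub_ne_s17 hp) m
  have h2 : ee p (m + 1) = p ^ m * ee p m + ee p (m + 1) * p ^ (m + 1) := by
    rw [← h1]; ring
  calc _ = (p ^ m * ee p m + ee p (m + 1) * p ^ (m + 1)) * x ^ (m + 1) := by rw [← h2]
    _ = _ := by ring

lemma euler {p : ℂ} (hp : ‖p‖ < 1) (x : ℂ) :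
    ∏' k : ℕ, (1 + x * p ^ k) = ∑' m, ee p m * x ^ m := by
  have hfin : ∀ n : ℕ, ∑' m, ee p m * x ^ m =
      (∏ k ∈ range n, (1 + x * p ^ k)) * ∑' m, ee p m * (p ^ n * x) ^ m := by
    intro n
    induction n with
    | zero => simp
    | succ n ih =>
      rw [ih, ee_fun hp (p ^ n * x), prod_range_succ, pow_succ']
      rw [show p * (p ^ n * x) = p * p ^ n * x by ring]
      ring
  have hm : Multipliable fun k : ℕ => (1 + x * p ^ k) := by
    apply multipliable_one_add_of_summable
    have := (summable_geometric_of_lt_one (norm_nonneg p) hp).mul_left ‖x‖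
    simpa [norm_mul, norm_pow] using this
  have h1 := hm.hasProd.tendsto_prod_nat
  have h2 : Filter.Tendsto (fun n : ℕ => ∑' m, ee p m * (p ^ n * x) ^ m) Filter.atTop
      (nhds (∑' m : ℕ, if m = 0 then (1 : ℂ) else 0)) := by
    refine tendsto_tsum_of_dominated_convergence (ee_summable hp x) ?_ ?_
    · intro m
      rcases Nat.eq_zero_or_pos m with rfl | hm0
      · simp [ee_zero]
      · have : Filter.Tendsto (fun n : ℕ => ee p m * (p ^ n * x) ^ m) Filter.atTop
            (nhds (ee p m * (0 * x) ^ m)) :=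
          (((tendsto_pow_atTop_nhds_zero_of_norm_lt_one hp).mul_const x).pow m).const_mul _
        simpa [hm0.ne'] using this
    · refine Filter.Eventually.of_forall fun n m => ?_
      rw [norm_mul, norm_mul, norm_pow, norm_pow, norm_mul, norm_pow]
      gcongr
      have : ‖p‖ ^ n ≤ 1 := pow_le_one₀ (norm_nonneg _) hp.le
      nlinarith [norm_nonneg x]
  rw [tsum_ite_eq] at h2
  have h3 := h1.mul h2
  have h4 : Filter.Tendsto (fun _ : ℕ => ∑' m, ee p m * x ^ m) Filter.atTop
      (nhds ((∏' k : ℕ, (1 + x * p ^ k)) * 1)) :=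
    h3.congr fun n => (hfin n).symm
  have := tendsto_nhds_unique h4 tendsto_const_nhds
  rw [← this, mul_one]

lemma shift_left (f g : ℕ → ℂ) (φ : ℕ → ℂ) (h0 : φ 0 = 0) (hs : ∀ m, φ (m + 1) = f m) (n : ℕ) :
    ∑ ij ∈ antidiagonal (n + 1), φ ij.1 * g ij.2 = ∑ ij ∈ antidiagonal n, f ij.1 * g ij.2 := by
  rw [Finset.Nat.sum_antidiagonal_succ]
  simp [h0, hs]

lemma shift_right (f g : ℕ → ℂ) (φ : ℕ → ℂ) (h0 : φ 0 = 0) (hs : ∀ m, φ (m + 1) = g m) (n : ℕ) :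
    ∑ ij ∈ antidiagonal (n + 1), f ij.1 * φ ij.2 = ∑ ij ∈ antidiagonal n, f ij.1 * g ij.2 := by
  rw [Finset.Nat.sum_antidiagonal_succ']
  simp [h0, hs]

lemma lag_left (f g : ℕ → ℂ) (n : ℕ) :
    ∑ ij ∈ antidiagonal n, lag f ij.1 * g ij.2
      = lag (fun n => ∑ ij ∈ antidiagonal n, f ij.1 * g ij.2) n := by
  cases n with
  | zero => simp [lag]
  | succ n => exact shift_left f g (lag f) rfl (fun _ => rfl) n

/-- The key abstract recurrence. -/
lemma A_rec {q : ℂ} (hq : q ≠ 0) (h : ∀ n : ℕ, 1 - (q ^ 2) ^ (n + 1) ≠ 0) (r : ℕ)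
    (hr : (q - q ^ r) * (1 - q ^ r) = 0) (W : ℂ) (G : ℕ → ℂ)
    (hG : ∀ l, W * G l = -((q ^ (2 * l + r + 1))⁻¹ * (1 - q ^ (2 * l + r + 1)) *
      (1 - q ^ (2 * l + r + 2))) * G (l + 1)
      + (2 - q ^ (2 * l + r + 1) - (q ^ (2 * l + r + 1))⁻¹) * G l)
    (A : ℕ → ℂ) (hA : A = fun L => ∑ ij ∈ antidiagonal L, ee (q ^ 2) ij.1 * G ij.2) (L : ℕ) :
    W * A L = -((q ^ (2 * L + r + 1))⁻¹ * (1 - q ^ (2 * L + r + 1)) *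
      (1 - q ^ (2 * L + r + 2))) * A (L + 1)
      + (2 - q ^ (2 * L + r) - q ^ (2 * L + r + 1)) * A L - q ^ (2 * L + r) / q * lag A L := by
  set e := ee (q ^ 2) with he
  have hes : ∀ m, e (m + 1) * (1 - (q ^ 2) ^ (m + 1)) = (q ^ 2) ^ m * e m := ee_succ h
  have hlag : ∀ m, lag e m = e m * ((1 - (q ^ 2) ^ m) * q ^ 2 / (q ^ 2) ^ m) := by
    intro m
    cases m with
    | zero => simp [lag]
    | succ m =>
      have := hes m
      simp only [lag]
      rw [← mul_div_assoc, ← mul_assoc, this]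
      field_simp
      ring
  have hlag2 : ∀ m, lag (lag e) m = e m * ((1 - (q ^ 2) ^ m) * q ^ 2 / (q ^ 2) ^ m) *
      ((1 - (q ^ 2) ^ m / q ^ 2) * q ^ 4 / (q ^ 2) ^ m) := by
    intro m
    cases m with
    | zero => simp [lag]
    | succ m =>
      rw [← hlag (m + 1)]
      change lag e m = e m * _
      rw [hlag m]
      field_simp
      ring
  have h1 : A L = ∑ ij ∈ antidiagonal (L + 1), lag e ij.1 * G ij.2 := by
    rw [lag_left, hA]; rfl
  have h2 : lag A L = ∑ ij ∈ antidiagonal (L + 1), lag (lag e) ij.1 * G ij.2 := by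
    rw [shift_left (lag e) G (lag (lag e)) rfl (fun _ => rfl), lag_left, hA]
  have h3 : W * A L = ∑ ij ∈ antidiagonal (L + 1),
      (e ij.1 * (-((q - q ^ (2 * ij.2 + r)) * (1 - q ^ (2 * ij.2 + r)) / q ^ (2 * ij.2 + r)) *
          G ij.2)
        + lag e ij.1 * ((2 - q ^ (2 * ij.2 + r + 1) - (q ^ (2 * ij.2 + r + 1))⁻¹) * G ij.2)) := by
    rw [sum_add_distrib,
      shift_left e (fun l => (2 - q ^ (2 * l + r + 1) - (q ^ (2 * l + r + 1))⁻¹) * G l) (lag e)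
        rfl (fun _ => rfl),
      shift_right e (fun l => -((q ^ (2 * l + r + 1))⁻¹ * (1 - q ^ (2 * l + r + 1)) *
      (1 - q ^ (2 * l + r + 2))) * G (l + 1))
        (fun l => -((q - q ^ (2 * l + r)) * (1 - q ^ (2 * l + r)) / q ^ (2 * l + r)) * G l)
        (by simp [hr]) ?_, ← sum_add_distrib, hA, mul_sum]
    · refine sum_congr rfl fun ij _ => ?_
      rw [mul_left_comm, hG]; ring
    · intro l
      rw [show 2 * (l + 1) + r = 2 * l + r + 2 by ring]
      congr 1
      have : q ^ (2 * l + r) ≠ 0 := pow_ne_zero _ hq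
      rw [pow_succ q (2 * l + r), pow_add q (2 * l + r) 2]
      field_simp
  rw [h3, h1, h2, hA]
  simp only [mul_sum]
  rw [← sum_add_distrib, ← sum_sub_distrib]
  refine sum_congr rfl fun ij hij => ?_
  obtain ⟨m, l⟩ := ij
  rw [HasAntidiagonal.mem_antidiagonal] at hij
  simp only at hij ⊢
  rw [hlag2, hlag]
  have hN : q ^ (2 * L + r) = q ^ (2 * l + r) * (q ^ 2) ^ m / q ^ 2 := by
    rw [eq_div_iff (pow_ne_zero _ hq), ← pow_mul, ← pow_add, ← pow_add]
    congr 1; omega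
  rw [pow_succ q (2 * L + r), pow_add q (2 * L + r) 2, hN, pow_succ q (2 * l + r)]
  have hY : q ^ (2 * l + r) ≠ 0 := pow_ne_zero _ hq
  have hM : (q ^ 2) ^ m ≠ 0 := pow_ne_zero _ (pow_ne_zero _ hq)
  generalize q ^ (2 * l + r) = Y at *
  generalize (q ^ 2) ^ m = M at *
  field_simp
  ring

lemma hh_eq {q z : ℂ} (h : ∀ n : ℕ, 1 - q ^ (n + 1) ≠ 0) (hz : z ≠ 0) (n : ℕ) :
    hh q z n = ∑ ij ∈ antidiagonal n, (z⁻¹ ^ ij.1 / qp q ij.1) * (z ^ ij.2 / qp q ij.2) := by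
  rw [hh, Hq, Finset.Nat.sum_antidiagonal_eq_sum_range_succ_mk, sum_div]
  refine sum_congr rfl fun k hk => ?_
  have hk' : k ≤ n := by simpa [Nat.lt_succ_iff] using hk
  have h1 := qp_ne h n
  have h2 := qp_ne h k
  have h3 := qp_ne h (n - k)
  have : z ^ ((n : ℤ) - 2 * k) = z⁻¹ ^ k * z ^ (n - k) := by
    rw [inv_pow, ← zpow_natCast z k, ← zpow_natCast z (n - k), ← zpow_neg, ← zpow_add₀ hz]
    congr 1
    push_cast [hk']; ring
  rw [this]
  field_simp

lemma hh_rec {q z : ℂ} (h : ∀ n : ℕ, 1 - q ^ (n + 1) ≠ 0) (hz : z ≠ 0) (n : ℕ) :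
    (z + z⁻¹) * hh q z n = (1 - q ^ (n + 1)) * hh q z (n + 1) + lag (hh q z) n := by
  set f : ℂ → ℕ → ℂ := fun y k => y ^ k / qp q k with hf
  have hfe : hh q z = fun n => ∑ ij ∈ antidiagonal n, f z⁻¹ ij.1 * f z ij.2 :=
    funext fun n => hh_eq h hz n
  have hlag : ∀ y k, y * lag (f y) k = f y k * (1 - q ^ k) := by
    intro y k
    cases k with
    | zero => simp [lag]
    | succ k =>
      have h1 := qp_ne h k
      have h2 := h k
      simp only [lag, hf, qp_succ, pow_succ y]
      field_simp
  have h1 : hh q z n = ∑ ij ∈ antidiagonal (n + 1), lag (f z⁻¹) ij.1 * f z ij.2 := by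
    rw [lag_left, hfe]; rfl
  have h2 : hh q z n = ∑ ij ∈ antidiagonal (n + 1), f z⁻¹ ij.1 * lag (f z) ij.2 := by
    rw [shift_right (f z⁻¹) (f z) (lag (f z)) rfl (fun _ => rfl), hfe]
  have h3 : lag (hh q z) n = ∑ ij ∈ antidiagonal (n + 1), lag (f z⁻¹) ij.1 * lag (f z) ij.2 := by
    rw [shift_right (lag (f z⁻¹)) (f z) (lag (f z)) rfl (fun _ => rfl), lag_left, hfe]
  rw [add_mul]
  nth_rewrite 1 [h2]
  rw [h1, h3, hfe]
  simp only [mul_sum]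
  rw [← sum_add_distrib, ← sum_add_distrib]
  refine sum_congr rfl fun ij hij => ?_
  rw [HasAntidiagonal.mem_antidiagonal] at hij
  rw [← hij, pow_add]
  have a1 := hlag z ij.2
  have a2 := hlag z⁻¹ ij.1
  have a3 : lag (f z⁻¹) ij.1 * lag (f z) ij.2
      = (z⁻¹ * lag (f z⁻¹) ij.1) * (z * lag (f z) ij.2) := by
    field_simp
  rw [a3, a1, a2, mul_left_comm, a1, ← mul_assoc z⁻¹, a2]
  ring

lemma hh_rec2 {q z : ℂ} (h : ∀ n : ℕ, 1 - q ^ (n + 1) ≠ 0) (hz : z ≠ 0) (n : ℕ) :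
    (z + z⁻¹) ^ 2 * hh q z n = (1 - q ^ (n + 1)) * (1 - q ^ (n + 2)) * hh q z (n + 2)
      + (2 - q ^ n - q ^ (n + 1)) * hh q z n + lag (lag (hh q z)) n := by
  have a := hh_rec h hz n
  have b := hh_rec h hz (n + 1)
  have c : (z + z⁻¹) * lag (hh q z) n = (1 - q ^ n) * hh q z n + lag (lag (hh q z)) n := by
    cases n with
    | zero => simp [lag]
    | succ n => exact hh_rec h hz n
  simp only [lag] at b
  linear_combination (z + z⁻¹) * a + (1 - q ^ (n + 1)) * b + c

lemma bb_rec {s z : ℂ} (hs : s ≠ 0) (h : ∀ n : ℕ, 1 - (s ^ 4) ^ (n + 1) ≠ 0) (hz : z ≠ 0)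
    (n : ℕ) :
    (z + z⁻¹) ^ 2 * bb s z n = -(((s ^ 4) ^ (n + 1))⁻¹ * (1 - (s ^ 4) ^ (n + 1)) *
      (1 - (s ^ 4) ^ (n + 2))) * bb s z (n + 2)
      + (2 - (s ^ 4) ^ n - (s ^ 4) ^ (n + 1)) * bb s z n
      - (s ^ 4) ^ n / s ^ 4 * lag (lag (bb s z)) n := by
  have a := hh_rec2 h hz n
  have b1 : bb s z (n + 2) = -(s ^ (n ^ 2) * I ^ n * (s ^ 4) ^ (n + 1) * hh (s ^ 4) z (n + 2)) := by
    rw [bb, pow_add I, I_sq, show (n + 2) ^ 2 = n ^ 2 + 4 * (n + 1) by ring, pow_add, pow_mul]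
    ring
  have b2 : (s ^ 4) ^ n / s ^ 4 * lag (lag (bb s z)) n
      = -(s ^ (n ^ 2) * I ^ n * lag (lag (hh (s ^ 4) z)) n) := by
    match n with
    | 0 => simp [lag]
    | 1 => simp [lag]
    | (n + 2) =>
      simp only [lag, bb]
      rw [pow_add I, I_sq, show (n + 2) ^ 2 = n ^ 2 + 4 * (n + 1) by ring, pow_add s, pow_mul,
        pow_succ (s ^ 4) (n + 1)]
      field_simp
  have hne : (s ^ 4) ^ (n + 1) ≠ 0 := pow_ne_zero _ (pow_ne_zero _ hs)
  rw [b1, b2, bb]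
  generalize (s ^ 4) ^ (n + 1) = Y at *
  have hY : Y⁻¹ * Y = 1 := inv_mul_cancel₀ hne
  linear_combination s ^ (n ^ 2) * I ^ n * a - s ^ (n ^ 2) * I ^ n * (1 - Y) *
    (1 - (s ^ 4) ^ (n + 2)) * hh (s ^ 4) z (n + 2) * hY

lemma qpg_two {s : ℂ} (hs : s ≠ 0) (c : ℂ) (n : ℕ) :
    qpg (c * s ^ (2 - 2 * ((n + 2 : ℕ) : ℤ))) (s ^ 4) (n + 2)
      = (1 - c * (s ^ (2 * n + 2))⁻¹) * (1 - c * s ^ (2 * n + 2)) *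
        qpg (c * s ^ (2 - 2 * (n : ℤ))) (s ^ 4) n := by
  have e1 : s ^ (2 - 2 * ((n + 2 : ℕ) : ℤ)) = (s ^ (2 * n + 2))⁻¹ := by
    rw [← zpow_natCast, ← zpow_neg]
    have : (2 - 2 * ((n + 2 : ℕ) : ℤ)) = -((2 * n + 2 : ℕ) : ℤ) := by push_cast; ring
    rw [this]
  have e2 : s ^ (2 - 2 * (n : ℤ)) = (s ^ (2 * n + 2))⁻¹ * s ^ 4 := by
    rw [← zpow_natCast, ← zpow_neg, ← zpow_natCast s 4, ← zpow_add₀ hs]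
    congr 1; push_cast; ring
  have e3 : (s ^ 4) ^ (n + 1) = s ^ (2 * n + 2) * s ^ (2 * n + 2) := by
    rw [← pow_mul, ← pow_add]; congr 1; ring
  have hne : s ^ (2 * n + 2) ≠ 0 := pow_ne_zero _ hs
  rw [e1, e2, qpg, qpg, prod_range_succ, prod_range_succ', e3]
  have : ∀ k, 1 - c * (s ^ (2 * n + 2))⁻¹ * (s ^ 4) ^ (k + 1)
      = 1 - c * ((s ^ (2 * n + 2))⁻¹ * s ^ 4) * (s ^ 4) ^ k := fun k => by ring
  simp only [this]
  have e4 : c * (s ^ (2 * n + 2))⁻¹ * (s ^ (2 * n + 2) * s ^ (2 * n + 2)) = c * s ^ (2 * n + 2) := by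
    field_simp
  rw [e4]
  ring

lemma psi_two {s z : ℂ} (hs : s ≠ 0) (hz : z ≠ 0) (n : ℕ) :
    psi4 (-I) s (n + 2) z = (-(z + z⁻¹) ^ 2 + 2 - (s ^ 4) ^ (n + 1) - ((s ^ 4) ^ (n + 1))⁻¹) *
      psi4 (-I) s n z := by
  have e3 : (s ^ 4) ^ (n + 1) = s ^ (2 * n + 2) * s ^ (2 * n + 2) := by
    rw [← pow_mul, ← pow_add]; congr 1; ring
  have hne : s ^ (2 * n + 2) ≠ 0 := pow_ne_zero _ hs
  rw [psi4, psi4, mul_right_comm, mul_right_comm (-I) _ z⁻¹, qpg_two hs, qpg_two hs, e3,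
    mul_right_comm (-I) _ z, mul_right_comm (-I) _ z⁻¹]
  generalize s ^ (2 * n + 2) = T at *
  have key : (1 - -I * z * T⁻¹) * (1 - -I * z * T) * ((1 - -I * z⁻¹ * T⁻¹) * (1 - -I * z⁻¹ * T))
      = -(z + z⁻¹) ^ 2 + 2 - T * T - (T * T)⁻¹ := by
    have hI : I ^ 2 = -1 := I_sq
    have hI3 : I ^ 3 = -I := by rw [pow_succ, hI]; ring
    have hI4 : I ^ 4 = 1 := I_pow_four
    field_simp
    ring_nf
    simp only [hI, hI3, hI4]
    ring
  rw [← key]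
  ring

lemma gg_rec {s z : ℂ} (hs : s ≠ 0) (h : ∀ n : ℕ, 1 - (s ^ 4) ^ (n + 1) ≠ 0) (hz : z ≠ 0)
    (n : ℕ) :
    (z + z⁻¹) ^ 2 * gg s z n = -(((s ^ 4) ^ (n + 1))⁻¹ * (1 - (s ^ 4) ^ (n + 1)) *
      (1 - (s ^ 4) ^ (n + 2))) * gg s z (n + 2)
      + (2 - (s ^ 4) ^ (n + 1) - ((s ^ 4) ^ (n + 1))⁻¹) * gg s z n := by
  have h1 := h n
  have h2 := h (n + 1)
  have h3 := qp_ne h n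
  have hne : (s ^ 4) ^ (n + 1) ≠ 0 := pow_ne_zero _ (pow_ne_zero _ hs)
  rw [gg, gg, psi_two hs hz, qp_succ _ (n + 1), qp_succ,
    show (n + 2) ^ 2 = n ^ 2 + 4 * (n + 1) by ring, pow_add s, pow_mul]
  rw [show n + 1 + 1 = n + 2 from rfl] at *
  generalize (s ^ 4) ^ (n + 1) = Y at *
  generalize (s ^ 4) ^ (n + 2) = Y2 at *
  generalize (z + z⁻¹) ^ 2 = W at *
  field_simp
  ring

lemma lag_two (X : ℕ → ℂ) (r : ℕ) (hr : r < 2) (L : ℕ) :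
    lag (fun L => X (2 * L + r)) L = lag (lag X) (2 * L + r) := by
  cases L with
  | zero => interval_cases r <;> rfl
  | succ L =>
    rw [show 2 * (L + 1) + r = (2 * L + r) + 2 by ring]
    rfl

lemma coeff_eq {s z : ℂ} (hs : s ≠ 0) (h : ∀ n : ℕ, 1 - (s ^ 4) ^ (n + 1) ≠ 0)
    (h' : ∀ n : ℕ, 1 - ((s ^ 4) ^ 2) ^ (n + 1) ≠ 0) (hz : z ≠ 0) (r : ℕ) (hr : r < 2) (L : ℕ) :
    ∑ ij ∈ antidiagonal L, ee ((s ^ 4) ^ 2) ij.1 * gg s z (2 * ij.2 + r) = bb s z (2 * L + r) := by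
  have hq : s ^ 4 ≠ 0 := pow_ne_zero _ hs
  have recA := A_rec hq h' r (by interval_cases r <;> simp) ((z + z⁻¹) ^ 2)
    (fun l => gg s z (2 * l + r)) (fun l => by
      rw [show 2 * (l + 1) + r = 2 * l + r + 2 by ring]
      exact gg_rec hs h hz (2 * l + r)) _ rfl
  set A : ℕ → ℂ := fun L => ∑ ij ∈ antidiagonal L, ee ((s ^ 4) ^ 2) ij.1 * gg s z (2 * ij.2 + r)
    with hA
  change ∀ L, (z + z⁻¹) ^ 2 * A L = -(((s ^ 4) ^ (2 * L + r + 1))⁻¹ *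
      (1 - (s ^ 4) ^ (2 * L + r + 1)) * (1 - (s ^ 4) ^ (2 * L + r + 2))) * A (L + 1)
      + (2 - (s ^ 4) ^ (2 * L + r) - (s ^ 4) ^ (2 * L + r + 1)) * A L
      - (s ^ 4) ^ (2 * L + r) / s ^ 4 * lag A L at recA
  set B : ℕ → ℂ := fun L => bb s z (2 * L + r) with hB
  have recB : ∀ L, (z + z⁻¹) ^ 2 * B L = -(((s ^ 4) ^ (2 * L + r + 1))⁻¹ *
      (1 - (s ^ 4) ^ (2 * L + r + 1)) * (1 - (s ^ 4) ^ (2 * L + r + 2))) * B (L + 1)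
      + (2 - (s ^ 4) ^ (2 * L + r) - (s ^ 4) ^ (2 * L + r + 1)) * B L
      - (s ^ 4) ^ (2 * L + r) / s ^ 4 * lag B L := by
    intro L
    rw [hB, lag_two _ r hr]
    simp only
    rw [show 2 * (L + 1) + r = 2 * L + r + 2 by ring]
    exact bb_rec hs h hz (2 * L + r)
  have main : ∀ L, A L = B L ∧ lag A L = lag B L := by
    intro L
    induction L with
    | zero =>
      refine ⟨?_, rfl⟩
      have := h 0
      simp only [hA, hB, HasAntidiagonal.antidiagonal_zero, sum_singleton, ee_zero, one_mul]
      interval_cases r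
      · simp [gg, bb, psi4, qpg, hh, Hq, qp]
      · have hI : I ^ 2 = -1 := I_sq
        have t : (1 + I * z) * (1 + I * z⁻¹) = I * (z + z⁻¹) := by
          field_simp
          ring_nf
          simp only [hI]
          ring
        have t2 : psi4 (-I) s 1 z = I * (z + z⁻¹) := by
          rw [← t]; simp [psi4, qpg]
        have t3 : Hq (s ^ 4) 1 z = z + z⁻¹ := by
          have : 1 - s ^ 4 ≠ 0 := by simpa using this
          simp [Hq, sum_range_succ, qp, this]
        simp [gg, bb, hh, t2, t3]
        ring
    | succ L ih =>
      refine ⟨?_, ih.1⟩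
      have a := recA L
      have b := recB L
      rw [ih.1, ih.2, b] at a
      have hne : -(((s ^ 4) ^ (2 * L + r + 1))⁻¹ *
        (1 - (s ^ 4) ^ (2 * L + r + 1)) * (1 - (s ^ 4) ^ (2 * L + r + 2))) ≠ 0 :=
        neg_ne_zero.2 (mul_ne_zero (mul_ne_zero (inv_ne_zero (pow_ne_zero _ hq)) (h _))
          (h (2 * L + r + 1)))
      refine mul_left_cancel₀ hne ?_
      linear_combination -a
  exact (main L).1

lemma half {s z t : ℂ} (hs : s ≠ 0) (h : ∀ n : ℕ, 1 - (s ^ 4) ^ (n + 1) ≠ 0)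
    (hp : ‖(s ^ 4) ^ 2‖ < 1) (hz : z ≠ 0) (r : ℕ) (hr : r < 2)
    (hS : Summable fun n => gg s z n * t ^ n) :
    (∑' m, ee ((s ^ 4) ^ 2) m * (t ^ 2) ^ m) * ∑' l, gg s z (2 * l + r) * t ^ (2 * l + r)
      = ∑' L, bb s z (2 * L + r) * t ^ (2 * L + r) := by
  have S2 : Summable fun l => ‖gg s z (2 * l + r) * t ^ (2 * l + r)‖ :=
    hS.norm.comp_injective (i := fun l : ℕ => 2 * l + r) fun a b hab => by
      simp only at hab; omega
  rw [tsum_mul_tsum_eq_tsum_sum_antidiagonal_of_summable_norm (ee_summable hp (t ^ 2)) S2]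
  refine tsum_congr fun L => ?_
  rw [← coeff_eq hs h (one_sub_ne_s17 hp) hz r hr, sum_mul]
  refine sum_congr rfl fun ij hij => ?_
  rw [HasAntidiagonal.mem_antidiagonal] at hij
  rw [← hij, ← pow_mul]
  ring

lemma split_even_odd (f : ℕ → ℂ) (hf : Summable f) :
    ∑' n, f n = ∑' n, f (2 * n) + ∑' n, f (2 * n + 1) := by
  have i0 : Function.Injective fun l : ℕ => 2 * l := fun a b hab => by
    simp only at hab; omega
  have i1 : Function.Injective fun l : ℕ => 2 * l + 1 := fun a b hab => by
    simp only at hab; omega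
  exact (tsum_even_add_odd (hf.comp_injective i0) (hf.comp_injective i1)).symm

lemma main_aux (q s : ℝ) (hq0 : 0 < q) (hq1 : q < 1) (hs : 0 < s)
    (hsq : s ^ 4 = q) (b : ℂ) (z : ℂ) (hz : z ≠ 0)
    (hsum1 : Summable fun n : ℕ =>
      (s : ℂ) ^ (n ^ 2) * psi4 (-I) (s : ℂ) n z * (b / 2) ^ n /
        qp ((s : ℂ) ^ 4) n)
    (hsum2 : Summable fun k : ℕ =>
      (s : ℂ) ^ (k ^ 2) / qp (q : ℂ) k * (I * b / 2) ^ k * Hq (q : ℂ) k z) :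
    (∏' k : ℕ, (1 + b ^ 2 / 4 * (q : ℂ) ^ (2 * k))) * qExpE (-I) (b / 2) (s : ℂ) z =
      ∑' k : ℕ, (s : ℂ) ^ (k ^ 2) / qp (q : ℂ) k * (I * b / 2) ^ k * Hq (q : ℂ) k z := by
  have hs0 : (s : ℂ) ≠ 0 := by exact_mod_cast hs.ne'
  have hqs : (q : ℂ) = (s : ℂ) ^ 4 := by rw [← hsq]; exact Complex.ofReal_pow s 4
  have hqn : ‖(s : ℂ) ^ 4‖ < 1 := by
    rw [← hqs, Complex.norm_real, Real.norm_of_nonneg hq0.le]; exact hq1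
  have hp : ‖((s : ℂ) ^ 4) ^ 2‖ < 1 := by
    rw [norm_pow]; exact pow_lt_one₀ (norm_nonneg _) hqn (by norm_num)
  have h := one_sub_ne_s17 hqn
  have eg : ∀ n : ℕ, (s : ℂ) ^ (n ^ 2) * psi4 (-I) (s : ℂ) n z * (b / 2) ^ n /
      qp ((s : ℂ) ^ 4) n = gg s z n * (b / 2) ^ n := fun n => by rw [gg]; ring
  have eb : ∀ k : ℕ, (s : ℂ) ^ (k ^ 2) / qp (q : ℂ) k * (I * b / 2) ^ k * Hq (q : ℂ) k z
      = bb s z k * (b / 2) ^ k := fun k => by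
    rw [bb, hh, hqs, mul_div_assoc, mul_pow]; ring
  simp only [eg] at hsum1
  simp only [eb] at hsum2
  rw [qExpE]
  simp only [eg, eb]
  have ep : ∀ k : ℕ, 1 + b ^ 2 / 4 * (q : ℂ) ^ (2 * k) = 1 + (b / 2) ^ 2 * (((s : ℂ) ^ 4) ^ 2) ^ k :=
    fun k => by rw [hqs, pow_mul ((s : ℂ) ^ 4) 2 k]; ring
  simp only [ep]
  rw [euler hp]
  have a0 := half hs0 h hp hz 0 (by norm_num) hsum1
  have a1 := half hs0 h hp hz 1 (by norm_num) hsum1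
  simp only [add_zero] at a0
  rw [split_even_odd _ hsum1, split_even_odd _ hsum2, mul_add, a0, a1]

/-- The generating relation
`(-b²/4; q²)_∞ E_q(x; -i, b/2) = ∑ₖ (q^{k²/4}/(q;q)ₖ)(ib/2)ᵏ H_k(x|q)`,
with `q = s⁴` and `x = cos θ`, `z = e^{iθ}`. -/
theorem qHermite_generating (q s : ℝ) (hq0 : 0 < q) (hq1 : q < 1) (hs : 0 < s)
    (hsq : s ^ 4 = q) (b : ℂ) (θ : ℝ)
    (hsum1 : Summable fun n : ℕ =>
      (s : ℂ) ^ (n ^ 2) * psi4 (-I) (s : ℂ) n (Complex.exp (θ * I)) * (b / 2) ^ n /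
        qp ((s : ℂ) ^ 4) n)
    (hsum2 : Summable fun k : ℕ =>
      (s : ℂ) ^ (k ^ 2) / qp (q : ℂ) k * (I * b / 2) ^ k * Hq (q : ℂ) k (Complex.exp (θ * I))) :
    (∏' k : ℕ, (1 + b ^ 2 / 4 * (q : ℂ) ^ (2 * k))) *
        qExpE (-I) (b / 2) (s : ℂ) (Complex.exp (θ * I)) =
      ∑' k : ℕ, (s : ℂ) ^ (k ^ 2) / qp (q : ℂ) k * (I * b / 2) ^ k *
        Hq (q : ℂ) k (Complex.exp (θ * I)) := by
  exact main_aux q s hq0 hq1 hs hsq b _ (Complex.exp_ne_zero _) hsum1 hsum2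
end
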